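/- Let K be a local field, i.e. a non-discrete, nontrivially normed field whose norm is nonarchimedean (‖x + y‖ ≤ max(‖x‖, ‖y‖)) and which is locally compact. Let d ≥ 1 and let M be a paracompact Hausdorff topological space such that every point of M has an open neighbourhood homeomorphic to an open subset of K^d (K^d = Fin d → K with the supremum norm). Then there exists a family (B_i)_{i∈ι} of pairwise disjoint, compact open subsets of M whose union is M, such that each B_i is homeomorphic to the closed unit ball O^d = {x ∈ K^d : ‖x‖ ≤ 1}. -/

import Mathlib

/-!
A manifold modelled on a locally compact ultrametric normed space `E` has a basis of compact open
sets. Paracompactness therefore yields a locally finite cover by compact open sets lying in chart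
domains, and subtracting from each the union of its predecessors in a well-order makes it disjoint:
unions of locally finite families of closed sets are closed, so the pieces stay clopen. A chart
carries a piece onto a compact open `S ⊆ E`, which contains every closed ball of some fixed small
radius `‖c‖` around its points. By the ultrametric inequality these balls are equal or disjoint, so
they partition `S`, and `y ↦ a + c • y` maps the unit ball onto the one centred at `a`.
-/

open Set Metric Function TopologicalSpace Topology

section DisjointRefinement

theorem pairwise_disjoint_diff_iUnion_lt {ι X : Type*} [LinearOrder ι] (s : ι → Set X) :
    Pairwise (Disjoint on fun i ↦ s i \ ⋃ j : Iio i, s j) :=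
  (pairwise_disjoint_on _).2 fun i _ hij ↦ disjoint_left.2 fun _ hxi hxj ↦
    hxj.2 (mem_iUnion.2 ⟨⟨i, hij⟩, hxi.1⟩)

theorem iUnion_diff_iUnion_lt {ι X : Type*} [LinearOrder ι] [WellFoundedLT ι] (s : ι → Set X) :
    ⋃ i, s i \ ⋃ j : Iio i, s j = ⋃ i, s i := by
  refine (iUnion_mono fun i ↦ sdiff_subset).antisymm (iUnion_subset fun i x hx ↦ ?_)
  obtain ⟨m, hxm, hmin⟩ := wellFounded_lt.has_min {i | x ∈ s i} ⟨i, hx⟩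
  refine mem_iUnion.2 ⟨m, hxm, fun hlt ↦ ?_⟩
  obtain ⟨⟨j, hjm⟩, hxj⟩ := mem_iUnion.1 hlt
  exact hmin j hxj hjm

variable {ι X : Type*} [TopologicalSpace X]

theorem exists_pairwise_disjoint_isClopen_subset {s : ι → Set X} (hfin : LocallyFinite s)
    (hs : ∀ i, IsClopen (s i)) :
    ∃ t : ι → Set X, Pairwise (Disjoint on t) ∧ (∀ i, IsClopen (t i)) ∧ ⋃ i, t i = ⋃ i, s i ∧
      ∀ i, t i ⊆ s i := by
  obtain ⟨_, _⟩ := exists_wellFoundedLT ι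
  have hpred (i : ι) : IsClopen (⋃ j : Iio i, s j) :=
    ⟨(hfin.comp_injective Subtype.val_injective).isClosed_iUnion fun j ↦ (hs j).isClosed,
      isOpen_iUnion fun j ↦ (hs j).isOpen⟩
  exact ⟨_, pairwise_disjoint_diff_iUnion_lt s, fun i ↦ (hs i).diff (hpred i),
    iUnion_diff_iUnion_lt s, fun i ↦ sdiff_subset⟩

variable [T2Space X] [ParacompactSpace X] [PrespectralSpace X] {k : ι → Set X}

theorem exists_locallyFinite_isCompact_isOpen_subset (hkc : ∀ i, IsCompact (k i))
    (hko : ∀ i, IsOpen (k i)) (hk : ⋃ i, k i = univ) :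
    ∃ s : ι → Set X, LocallyFinite s ∧ (∀ i, IsCompact (s i)) ∧ (∀ i, IsOpen (s i)) ∧
      ⋃ i, s i = univ ∧ ∀ i, s i ⊆ k i := by
  obtain ⟨v, hvo, hv, hvfin, hvk⟩ := precise_refinement k hko hk
  obtain ⟨C, hC, hCclosed, hCv⟩ := exists_iUnion_eq_closed_subset hvo hvfin.point_finite hv
  have hCc (i : ι) : IsCompact (C i) :=
    (hkc i).of_isClosed_subset (hCclosed i) ((hCv i).trans (hvk i))
  choose s hsc hso hCs hsv using fun i ↦
    PrespectralSpace.exists_isCompact_and_isOpen_between (hCc i) (hvo i) (hCv i)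
  exact ⟨s, hvfin.subset hsv, hsc, hso, univ_subset_iff.1 (hC ▸ iUnion_mono hCs),
    fun i ↦ (hsv i).trans (hvk i)⟩

theorem exists_pairwise_disjoint_isCompact_isOpen_subset (hkc : ∀ i, IsCompact (k i))
    (hko : ∀ i, IsOpen (k i)) (hk : ⋃ i, k i = univ) :
    ∃ t : ι → Set X, Pairwise (Disjoint on t) ∧ (∀ i, IsCompact (t i)) ∧ (∀ i, IsOpen (t i)) ∧
      ⋃ i, t i = univ ∧ ∀ i, t i ⊆ k i := by
  obtain ⟨s, hsfin, hsc, hso, hs, hsk⟩ := exists_locallyFinite_isCompact_isOpen_subset hkc hko hk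
  obtain ⟨t, htd, htclopen, ht, hts⟩ :=
    exists_pairwise_disjoint_isClopen_subset hsfin fun i ↦ ⟨(hsc i).isClosed, hso i⟩
  exact ⟨t, htd, fun i ↦ (hsc i).of_isClosed_subset (htclopen i).isClosed (hts i),
    fun i ↦ (htclopen i).isOpen, ht.trans hs, fun i ↦ (hts i).trans (hsk i)⟩

end DisjointRefinement

section Charts

theorem prespectralSpace_of_totallyDisconnectedSpace (X : Type*) [TopologicalSpace X] [T2Space X]
    [LocallyCompactSpace X] [TotallyDisconnectedSpace X] : PrespectralSpace X where
  isTopologicalBasis := by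
    refine isTopologicalBasis_of_isOpen_of_nhds (fun U hU ↦ hU.1) fun x U hxU hU ↦ ?_
    obtain ⟨L, hL, hxL, hLU⟩ := exists_compact_subset hU hxU
    obtain ⟨D, hD, hxD, hDL⟩ :=
      loc_compact_Haus_tot_disc_of_zero_dim.exists_subset_of_mem_open hxL isOpen_interior
    have hDL' : D ⊆ L := hDL.trans interior_subset
    exact ⟨D, ⟨hD.isOpen, hL.of_isClosed_subset hD.isClosed hDL'⟩, hxD, hDL'.trans hLU⟩

variable (H M : Type*) [TopologicalSpace H] [TopologicalSpace M]

theorem prespectralSpace_of_chartedSpace [PrespectralSpace H] [ChartedSpace H M] :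
    PrespectralSpace M := by
  let U (x : M) : Opens M :=
    ⟨(chartAt H x).source, (chartAt H x).open_source⟩
  have hU : IsOpenCover U :=
    .mk (eq_top_iff.2 fun x _ ↦ Opens.mem_iSup.2 ⟨x, mem_chart_source H x⟩)
  have (x : M) : PrespectralSpace (U x) :=
    (chartAt H x).isOpenEmbedding_restrict.prespectralSpace
  exact .of_isOpenCover hU

variable {H M}

theorem exists_openPartialHomeomorph_mem_source {V : Set M} {W : Set H} (hV : IsOpen V)
    (hW : IsOpen W) (e : V ≃ₜ W) {x : M} (hx : x ∈ V) :
    ∃ φ : OpenPartialHomeomorph M H, x ∈ φ.source := by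
  have : Nonempty V := ⟨⟨x, hx⟩⟩
  let incl : OpenPartialHomeomorph V M := hV.isOpenEmbedding_subtypeVal.toOpenPartialHomeomorph _
  let coord : OpenPartialHomeomorph V H :=
    (hW.isOpenEmbedding_subtypeVal.comp e.isOpenEmbedding).toOpenPartialHomeomorph _
  exact ⟨incl.symm.trans coord, by simp [incl, coord, hx]⟩

theorem nonempty_chartedSpace_of_forall_exists_mem_source
    (h : ∀ x : M, ∃ φ : OpenPartialHomeomorph M H, x ∈ φ.source) :
    Nonempty (ChartedSpace H M) := by
  choose φ hφ using h
  exact ⟨{ atlas := range φ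
           chartAt := φ
           mem_chart_source := hφ
           chart_mem_atlas := mem_range_self }⟩

end Charts

/-- `S` is a disjoint union of open subsets of the ambient space `X`, each homeomorphic to `Z`.
The family of pieces is encoded as the set of its members; for `Z` a closed ball these are the
decompositions into balls. -/
def IsDisjointUnionOfOpenCopies (Z : Type*) {X : Type*} [TopologicalSpace Z] [TopologicalSpace X]
    (S : Set X) : Prop :=
  ∃ 𝓑 : Set (Set X), 𝓑.PairwiseDisjoint id ∧ ⋃₀ 𝓑 = S ∧
    ∀ B ∈ 𝓑, IsOpen B ∧ Nonempty (B ≃ₜ Z)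

namespace IsDisjointUnionOfOpenCopies

variable {Z X Y : Type*} [TopologicalSpace Z] [TopologicalSpace X] [TopologicalSpace Y]

theorem image {S : Set X} (h : IsDisjointUnionOfOpenCopies Z S) (φ : OpenPartialHomeomorph X Y)
    (hS : S ⊆ φ.source) : IsDisjointUnionOfOpenCopies Z (φ '' S) := by
  obtain ⟨𝓑, hdisj, rfl, hB⟩ := h
  have hsub {B : Set X} (hmem : B ∈ 𝓑) : B ⊆ φ.source := (subset_sUnion_of_mem hmem).trans hS
  refine ⟨Set.image φ '' 𝓑, ?_, by rw [image_sUnion, sUnion_image], ?_⟩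
  · rintro _ ⟨B, hmem, rfl⟩ _ ⟨B', hmem', rfl⟩ hne
    exact (hdisj hmem hmem' (ne_of_apply_ne _ hne)).image φ.injOn (hsub hmem) (hsub hmem')
  · rintro _ ⟨B, hmem, rfl⟩
    obtain ⟨hopen, ⟨e⟩⟩ := hB B hmem
    exact ⟨φ.isOpen_image_of_subset_source hopen (hsub hmem),
      ⟨(φ.homeomorphOfImageSubsetSource (hsub hmem) rfl).symm.trans e⟩⟩

theorem iUnion {ι : Type*} {S : ι → Set X} (hS : Pairwise (Disjoint on S))
    (h : ∀ i, IsDisjointUnionOfOpenCopies Z (S i)) :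
    IsDisjointUnionOfOpenCopies Z (⋃ i, S i) := by
  choose 𝓑 hdisj hunion hB using h
  have hsub {i : ι} {B : Set X} (hmem : B ∈ 𝓑 i) : B ⊆ S i :=
    hunion i ▸ subset_sUnion_of_mem hmem
  refine ⟨⋃ i, 𝓑 i, ?_, by simp only [sUnion_iUnion, hunion], ?_⟩
  · intro B hmem B' hmem' hne
    obtain ⟨i, hi⟩ := mem_iUnion.1 hmem
    obtain ⟨j, hj⟩ := mem_iUnion.1 hmem'
    obtain rfl | hij := eq_or_ne i j
    · exact hdisj i hi hj hne
    · exact (hS hij).mono (hsub hi) (hsub hj)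
  · intro B hmem
    obtain ⟨i, hi⟩ := mem_iUnion.1 hmem
    exact hB i B hi

end IsDisjointUnionOfOpenCopies

theorem pairwiseDisjoint_range_closedBall {X : Type*} [PseudoMetricSpace X] [IsUltrametricDist X]
    (r : ℝ) : (range fun x : X ↦ closedBall x r).PairwiseDisjoint id := by
  rintro _ ⟨x, rfl⟩ _ ⟨y, rfl⟩ hne
  exact (IsUltrametricDist.closedBall_eq_or_disjoint x y r).resolve_left hne

theorem nonempty_closedBall_norm_homeomorph_unitClosedBall {K E : Type*} [NormedField K]
    [SeminormedAddCommGroup E] [NormedSpace K E] (a : E) {c : K} (hc : c ≠ 0) :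
    Nonempty (closedBall a ‖c‖ ≃ₜ closedBall (0 : E) 1) := by
  let h : E ≃ₜ E := (Homeomorph.smulOfNeZero c hc).trans (Homeomorph.addLeft a)
  have himage : h '' closedBall 0 1 = closedBall a ‖c‖ := calc
    h '' closedBall 0 1 = (a + ·) '' ((c • ·) '' closedBall (0 : E) 1) :=
      image_comp (a + ·) (c • ·) _
    _ = (a + ·) '' closedBall (0 : E) ‖c‖ := by
      rw [image_smul, smul_closedBall' hc, smul_zero, mul_one]
    _ = closedBall a ‖c‖ := by simp
  exact ⟨((h.image _).trans (.setCongr himage)).symm⟩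

theorem isDisjointUnionOfOpenCopies_of_isCompact_of_isOpen (K : Type*) {E : Type*}
    [NontriviallyNormedField K] [SeminormedAddCommGroup E] [NormedSpace K E] [IsUltrametricDist E]
    {S : Set E} (hSc : IsCompact S) (hSo : IsOpen S) :
    IsDisjointUnionOfOpenCopies (closedBall (0 : E) 1) S := by
  obtain ⟨δ, hδ, hδS⟩ := hSc.exists_cthickening_subset_open hSo subset_rfl
  obtain ⟨c, hc, hcδ⟩ := NormedField.exists_norm_lt K hδ
  have hball {x : E} (hx : x ∈ S) : closedBall x ‖c‖ ⊆ S :=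
    (closedBall_subset_closedBall hcδ.le).trans ((closedBall_subset_cthickening hx δ).trans hδS)
  refine ⟨(closedBall · ‖c‖) '' S,
    (pairwiseDisjoint_range_closedBall ‖c‖).subset (image_subset_range _ _), ?_, ?_⟩
  · rw [sUnion_image]
    exact (iUnion₂_subset fun x ↦ hball).antisymm fun x hx ↦
      mem_biUnion hx (mem_closedBall_self hc.le)
  · rintro _ ⟨x, -, rfl⟩
    exact ⟨IsUltrametricDist.isOpen_closedBall x hc.ne',
      nonempty_closedBall_norm_homeomorph_unitClosedBall x (norm_pos_iff.1 hc)⟩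

theorem isDisjointUnionOfOpenCopies_univ_of_chartedSpace (K E M : Type*)
    [NontriviallyNormedField K] [NormedAddCommGroup E] [NormedSpace K E] [IsUltrametricDist E]
    [LocallyCompactSpace E] [TopologicalSpace M] [T2Space M] [ParacompactSpace M]
    [ChartedSpace E M] :
    IsDisjointUnionOfOpenCopies (closedBall (0 : E) 1) (univ : Set M) := by
  have : PrespectralSpace E := prespectralSpace_of_totallyDisconnectedSpace E
  have : PrespectralSpace M := prespectralSpace_of_chartedSpace E M
  choose k hk hxk hkφ using fun x : M ↦
    PrespectralSpace.isTopologicalBasis.exists_subset_of_mem_open (mem_chart_source E x)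
      (chartAt E x).open_source
  obtain ⟨t, htd, htc, hto, ht, htk⟩ := exists_pairwise_disjoint_isCompact_isOpen_subset
    (fun x ↦ (hk x).2) (fun x ↦ (hk x).1) (iUnion_eq_univ_iff.2 fun x ↦ ⟨x, hxk x⟩)
  refine ht ▸ .iUnion htd fun x ↦ ?_
  let φ := chartAt E x
  have htφ : t x ⊆ φ.source := (htk x).trans (hkφ x)
  have hcopies : IsDisjointUnionOfOpenCopies (closedBall (0 : E) 1) (φ '' t x) :=
    isDisjointUnionOfOpenCopies_of_isCompact_of_isOpen K
      ((htc x).image_of_continuousOn (φ.continuousOn.mono htφ))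
      (φ.isOpen_image_of_subset_source (hto x) htφ)
  rw [← φ.symm_image_image_of_subset_source htφ]
  exact hcopies.image φ.symm (φ.mapsTo.mono_left htφ).image_subset

theorem stmt8_general (K : Type*) {E : Type*} [NontriviallyNormedField K] [NormedAddCommGroup E]
    [NormedSpace K E] [IsUltrametricDist E] [LocallyCompactSpace E]
    {M : Type u} [TopologicalSpace M] [T2Space M] [ParacompactSpace M]
    (hloc : ∀ x : M, ∃ (V : Set M) (W : Set E),
      x ∈ V ∧ IsOpen V ∧ IsOpen W ∧ Nonempty (V ≃ₜ W)) :
    ∃ (ι : Type u) (B : ι → Set M),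
      Pairwise (Disjoint on B) ∧ (∀ i, IsCompact (B i)) ∧ (∀ i, IsOpen (B i)) ∧
      (⋃ i, B i) = univ ∧ ∀ i, Nonempty (B i ≃ₜ closedBall (0 : E) 1) := by
  have : ProperSpace E := .of_locallyCompactSpace K
  obtain ⟨_⟩ : Nonempty (ChartedSpace E M) :=
    nonempty_chartedSpace_of_forall_exists_mem_source fun x ↦
      let ⟨_, _, hx, hV, hW, ⟨e⟩⟩ := hloc x
      exists_openPartialHomeomorph_mem_source hV hW e hx
  obtain ⟨𝓑, hdisj, hunion, hB⟩ :=
    isDisjointUnionOfOpenCopies_univ_of_chartedSpace K E M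
  refine ⟨𝓑, Subtype.val, fun B B' hne ↦ hdisj B.2 B'.2 (Subtype.val_injective.ne hne), fun B ↦ ?_,
    fun B ↦ (hB B B.2).1, by rw [← sUnion_eq_iUnion, hunion], fun B ↦ (hB B B.2).2⟩
  obtain ⟨e⟩ := (hB B B.2).2
  exact isCompact_iff_compactSpace.2 e.symm.compactSpace

theorem stmt8 {K : Type*} [NontriviallyNormedField K] [IsUltrametricDist K]
    [LocallyCompactSpace K] {d : ℕ} (hd : 1 ≤ d)
    {M : Type u} [TopologicalSpace M] [T2Space M] [ParacompactSpace M]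
    (hloc : ∀ x : M, ∃ (V : Set M) (W : Set (Fin d → K)),
      x ∈ V ∧ IsOpen V ∧ IsOpen W ∧ Nonempty (V ≃ₜ W)) :
    ∃ (ι : Type u) (B : ι → Set M),
      Pairwise (Function.onFun Disjoint B) ∧
      (∀ i, IsCompact (B i)) ∧ (∀ i, IsOpen (B i)) ∧ (⋃ i, B i) = Set.univ ∧
      ∀ i, Nonempty (B i ≃ₜ (Metric.closedBall (0 : Fin d → K) 1 : Set (Fin d → K))) :=
  stmt8_general K hloc
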